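/- Let k ≥ 1 and n ≥ k + 2, and let e_n denote the last standard basis vector of ℝ^n. Let s_1, …, s_l be arbitrary (k−1)-simplices in ℝ^n and F_1, …, F_l ∈ ℝ^n arbitrary forces. If the finite system of forces F = Σ_{i=1}^{l} F_i μ_{s_i} is in equilibrium, then F = B + F^h, where B is a finite sum of k-beams with symmetric coefficient matrices structural for their simplices, and F^h is a finite system of forces in equilibrium whose simplices and whose force vectors all lie in the hyperplane {x ∈ ℝ^n : ⟨x, e_n⟩ = 0}. -/

import Mathlib

open MeasureTheory Matrix
open scoped RealInnerProductSpace

noncomputable section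

abbrev Euc (n : ℕ) : Type := EuclideanSpace ℝ (Fin n)

/-- The action of an `n × n` real matrix on a vector of `ℝⁿ`. -/
def matVec {n : ℕ} (A : Matrix (Fin n) (Fin n) ℝ) (v : Euc n) : Euc n :=
  Matrix.toEuclideanLin A v

/-- `wedge v w = v wᵀ − w vᵀ`. -/
def wedge {n : ℕ} (v w : Euc n) : Matrix (Fin n) (Fin n) ℝ :=
  Matrix.of fun p q => v p * w q - w p * v q

/-- `rankOne v = v vᵀ`. -/
def rankOne {n : ℕ} (v : Euc n) : Matrix (Fin n) (Fin n) ℝ :=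
  Matrix.of fun p q => v p * v q

/-- The (closed) simplex spanned by a family of points: the convex hull of its range. -/
def simplexSet {n : ℕ} {ι : Type*} (b : ι → Euc n) : Set (Euc n) :=
  convexHull ℝ (Set.range b)

/-- The barycenter of a finite family of points. -/
def bary {n : ℕ} {ι : Type*} [Fintype ι] (b : ι → Euc n) : Euc n :=
  (Fintype.card ι : ℝ)⁻¹ • ∑ i, b i

/-- The vertices of the face of the simplex `b` opposite to the vertex `i`. -/
def face {n K : ℕ} (b : Fin K → Euc n) (i : Fin K) : {j : Fin K // j ≠ i} → Euc n :=
  fun j => b j.1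

/-- The vector measure `Σᵢ Fᵢ μ_{sᵢ}` of a finite system of forces, as an
`ℝⁿ`-valued set function; here `d` is the Hausdorff dimension of the simplices. -/
def sys {n l : ℕ} {ι : Type*} (d : ℝ) (s : Fin l → ι → Euc n) (F : Fin l → Euc n) :
    Set (Euc n) → Euc n :=
  fun S => ∑ i, (μH[d] (S ∩ simplexSet (s i))).toReal • F i

/-- A finite system of forces is in equilibrium: zero net force and zero net torque. -/
def equil {n l : ℕ} {ι : Type*} [Fintype ι] (d : ℝ) (s : Fin l → ι → Euc n)
    (F : Fin l → Euc n) : Prop :=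
  (∑ i, (μH[d] (simplexSet (s i))).toReal • F i = 0) ∧
  (∑ i, (μH[d] (simplexSet (s i))).toReal • wedge (bary (s i)) (F i) = 0)

/-- `v` is the outward unit conormal of the face of `b` opposite vertex `i`. -/
def IsConormal {n K : ℕ} (b : Fin K → Euc n) (i : Fin K) (v : Euc n) : Prop :=
  v ∈ vectorSpan ℝ (Set.range b) ∧ ‖v‖ = 1 ∧
    (∀ w ∈ vectorSpan ℝ (Set.range (face b i)), ⟪v, w⟫ = 0) ∧
    ⟪v, b i - bary (face b i)⟫ < 0

open scoped Classical in
/-- The outward unit conormal of the face of `b` opposite vertex `i`. -/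
def conormal {n K : ℕ} (b : Fin K → Euc n) (i : Fin K) : Euc n :=
  if h : ∃ v, IsConormal b i v then h.choose else 0

/-- A matrix is structural for a simplex if its range is contained in the
direction space of the simplex. -/
def Structural {n : ℕ} {ι : Type*} (A : Matrix (Fin n) (Fin n) ℝ) (b : ι → Euc n) : Prop :=
  ∀ v, matVec A v ∈ vectorSpan ℝ (Set.range b)

/-- The beam `A ⊗ Beam(τ)` of a simplex `τ` with `K` vertices (so of dimension `K − 1`,
with faces of dimension `K − 2`), as an `ℝⁿ`-valued set function. -/
def beam {n K : ℕ} (A : Matrix (Fin n) (Fin n) ℝ) (b : Fin K → Euc n) :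
    Set (Euc n) → Euc n :=
  fun S => ∑ i, (μH[(K : ℝ) - 2] (S ∩ simplexSet (face b i))).toReal • matVec A (conormal b i)

/-- `G` is a finite sum of beams over simplices with `K` vertices, with symmetric
coefficient matrices that are structural for their simplices. -/
def IsBeamSum {n : ℕ} (K : ℕ) (G : Set (Euc n) → Euc n) : Prop :=
  ∃ (m : ℕ) (τ : Fin m → Fin K → Euc n) (A : Fin m → Matrix (Fin n) (Fin n) ℝ),
    (∀ j, AffineIndependent ℝ (τ j)) ∧ (∀ j, (A j).IsSymm) ∧
    (∀ j, Structural (A j) (τ j)) ∧ (G = fun S => ∑ j, beam (A j) (τ j) S)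

/-!
The rank-one beam with matrix `w wᵀ`, where `w = q - p` is an edge of a simplex, carries forces only
on the facets opposite `p` and `q`, parallel to `w` and balancing each other. So modulo beams a
force parallel to an edge `pq` may be moved from the facet opposite `q` to the facet opposite `p`.

Let all simplices share a face `Y`, choose a point `y` in general position and suppose that every
force on a simplex through `Y` and `y` vanishes. Moving around a triangle of vertices off `Y` turns
a force into its own negative, so every force vanishes as long as the simplices have two vertices
off `Y`. Hence, modulo beams, forces can be pushed onto simplices through `Y` and `y`, and after
repetition onto simplices `σ ∪ {p}` sharing all but one vertex. Equilibrium then says that the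
forces at the points `p` have zero sum and zero torque, and in the coordinates of an affine basis in
general position their total is the pairing of a symmetric array with an antisymmetric one. No
horizontal part is left over.
-/

section GeneralPosition

variable {𝕜 V : Type*} [Field 𝕜] [AddCommGroup V] [Module 𝕜 V]

open scoped Pointwise in
theorem exists_forall_notMem_affineSubspace [Infinite 𝕜] {ι : Type*} [Finite ι]
    (A : ι → AffineSubspace 𝕜 V) (hA : ∀ i, A i ≠ ⊤) : ∃ x, ∀ i, x ∉ A i := by
  have := Fintype.ofFinite {i // (A i : Set V).Nonempty}
  by_contra! hcover
  have hne : ∀ i : {i // (A i : Set V).Nonempty}, ∃ x, x ∈ A i := fun i => i.2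
  choose x hx using hne
  have hcoset : ⋃ i ∈ (Finset.univ : Finset {i // (A i : Set V).Nonempty}),
      x i +ᵥ ((A i).direction.toAddSubgroup : Set V) = Set.univ := by
    refine Set.eq_univ_of_forall fun z => ?_
    obtain ⟨i, hi⟩ := hcover z
    refine Set.mem_biUnion (Finset.mem_univ ⟨i, z, hi⟩) ⟨z - x ⟨i, z, hi⟩, ?_, by simp⟩
    exact AffineSubspace.vsub_mem_direction hi (hx ⟨i, z, hi⟩)
  obtain ⟨i, -, hfin⟩ := AddSubgroup.exists_finiteIndex_of_leftCoset_cover hcoset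
  have hdir : (A i).direction ≠ ⊤ := fun h =>
    hA i ((AffineSubspace.direction_eq_top_iff_of_nonempty i.2).mp h)
  have : Finite (V ⧸ (A i).direction) := AddSubgroup.finite_quotient_of_finiteIndex
  have : Nontrivial (V ⧸ (A i).direction) := Submodule.Quotient.nontrivial_iff.mpr hdir
  have : Infinite (V ⧸ (A i).direction) := Module.Free.infinite 𝕜 _
  exact not_finite (V ⧸ (A i).direction)

theorem affineSpan_finset_ne_top {t : Finset V} (ht : t.card ≤ Module.finrank 𝕜 V) :
    affineSpan 𝕜 (t : Set V) ≠ ⊤ := by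
  intro htop
  obtain rfl | hne := t.eq_empty_or_nonempty
  · simp at htop
  have : Nonempty t := hne.to_subtype
  have hle := finrank_vectorSpan_range_add_one_le 𝕜 ((↑) : t → V)
  rw [Subtype.range_coe_subtype, Finset.setOfPred_mem, ← direction_affineSpan, htop,
    AffineSubspace.direction_top, finrank_top, Fintype.card_coe] at hle
  omega

theorem exists_forall_notMem_affineSpan [Infinite 𝕜] {ι : Type*} [Finite ι] (t : ι → Finset V)
    (ht : ∀ i, (t i).card ≤ Module.finrank 𝕜 V) :
    ∃ x, ∀ i, x ∉ affineSpan 𝕜 (t i : Set V) :=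
  exists_forall_notMem_affineSubspace _ fun i => affineSpan_finset_ne_top (ht i)

/-- `t` consists of `m` affinely independent points: it is the vertex set of an
`(m - 1)`-simplex. Counting vertices makes the empty set a legitimate common face. -/
structure IsVertexSet (𝕜 : Type*) {V : Type*} [Field 𝕜] [AddCommGroup V] [Module 𝕜 V] (m : ℕ)
    (t : Finset V) : Prop where
  affineIndependent : AffineIndependent 𝕜 ((↑) : t → V)
  card_eq : t.card = m

namespace IsVertexSet

variable {m : ℕ} {t : Finset V} [DecidableEq V]

theorem notMem_affineSpan_erase (ht : IsVertexSet 𝕜 m t) {x : V} (hx : x ∈ t) :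
    x ∉ affineSpan 𝕜 (t.erase x : Set V) := by
  have h := ht.affineIndependent.notMem_affineSpan_sdiff ⟨x, hx⟩ Set.univ
  convert h using 3
  ext y
  aesop

theorem erase (ht : IsVertexSet 𝕜 (m + 1) t) {x : V} (hx : x ∈ t) :
    IsVertexSet 𝕜 m (t.erase x) where
  affineIndependent := ht.affineIndependent.mono (s := (t.erase x : Set V)) (t := t)
    (Finset.erase_subset x t)
  card_eq := by rw [Finset.card_erase_of_mem hx, ht.card_eq, Nat.add_sub_cancel]

theorem insert (ht : IsVertexSet 𝕜 m t) {x : V} (hx : x ∉ affineSpan 𝕜 (t : Set V)) :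
    IsVertexSet 𝕜 (m + 1) (insert x t) where
  affineIndependent := by
    have hmem (y : {y : ↥(Insert.insert x t) // y ≠ ⟨x, Finset.mem_insert_self x t⟩}) :
        (y : V) ∈ t :=
      Finset.mem_of_mem_insert_of_ne y.1.2 fun h => y.2 (Subtype.ext h)
    have hrest := ht.affineIndependent.comp_embedding
      ⟨fun y => ⟨y, hmem y⟩, fun y z h => Subtype.ext (Subtype.ext (Subtype.mk.inj h))⟩
    refine hrest.affineIndependent_of_notMem_span fun hspan => hx (affineSpan_mono 𝕜 ?_ hspan)
    rintro _ ⟨y, hy, rfl⟩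
    exact hmem ⟨y, hy⟩
  card_eq := by
    rw [Finset.card_insert_of_notMem fun h => hx (subset_affineSpan 𝕜 _ h), ht.card_eq]

theorem of_insert {x : V} (h : IsVertexSet 𝕜 (m + 1) (Insert.insert x t)) (ht : t.card ≤ m) :
    x ∉ t ∧ IsVertexSet 𝕜 m t := by
  have hx : x ∉ t := fun hx => by
    have hcard := h.card_eq
    rw [Finset.insert_eq_of_mem hx] at hcard
    omega
  exact ⟨hx, Finset.erase_insert hx ▸ h.erase (Finset.mem_insert_self x t)⟩

theorem notMem_affineSpan_insert_comm (ht : IsVertexSet 𝕜 m t) {x y : V}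
    (hx : x ∉ affineSpan 𝕜 (t : Set V))
    (hy : y ∉ affineSpan 𝕜 ((Insert.insert x t : Finset V) : Set V)) :
    x ∉ affineSpan 𝕜 ((Insert.insert y t : Finset V) : Set V) := by
  have hxt : x ∉ Insert.insert y t := by
    rw [Finset.mem_insert, not_or]
    exact ⟨fun h => hy (subset_affineSpan 𝕜 _ (by simp [h])),
      fun h => hx (subset_affineSpan 𝕜 _ h)⟩
  have h := ((ht.insert hx).insert hy).notMem_affineSpan_erase (x := x) (by simp)
  rwa [Finset.insert_comm, Finset.erase_insert hxt] at h

end IsVertexSet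

theorem exists_forall_isVertexSet_insert_insert [DecidableEq V] [Infinite 𝕜] {d : ℕ}
    (hd : d + 1 ≤ Module.finrank 𝕜 V) {σ P X : Finset V}
    (hP : ∀ p ∈ P, IsVertexSet 𝕜 (d + 1) (insert p σ)) (hX : X.card ≤ Module.finrank 𝕜 V) :
    ∃ y, y ∉ affineSpan 𝕜 (X : Set V) ∧ ∀ p ∈ P, IsVertexSet 𝕜 (d + 2) (insert y (insert p σ)) := by
  obtain ⟨y, hy⟩ := exists_forall_notMem_affineSpan (𝕜 := 𝕜)
    (fun o : Option P => o.elim X fun p => insert (p : V) σ)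
    (Option.forall.mpr ⟨hX, fun p => (hP p p.2).card_eq.trans_le hd⟩)
  exact ⟨y, hy none, fun p hp => (hP p hp).insert (hy (some ⟨p, hp⟩))⟩

theorem exists_isVertexSet_pairwise_insert_insert [DecidableEq V] [Infinite 𝕜] {d : ℕ}
    (hd : d + 1 ≤ Module.finrank 𝕜 V) {σ P : Finset V} (hσ : σ.card = d) (hne : P.Nonempty)
    (hP : ∀ p ∈ P, IsVertexSet 𝕜 (d + 1) (insert p σ)) {m : ℕ}
    (hm : m ≤ Module.finrank 𝕜 V + 1) :
    ∃ X, IsVertexSet 𝕜 m X ∧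
      (∀ x ∈ X, ∀ p ∈ P, IsVertexSet 𝕜 (d + 2) (insert p (insert x σ))) ∧
      (X : Set V).Pairwise fun x y => IsVertexSet 𝕜 (d + 2) (insert x (insert y σ)) := by
  induction m with
  | zero => exact ⟨∅, ⟨affineIndependent_of_subsingleton 𝕜 _, rfl⟩, by simp, by simp⟩
  | succ m ih =>
    obtain ⟨X, hX, hXP, hXX⟩ := ih (by omega)
    obtain ⟨p₀, hp₀⟩ := hne
    have hXσ (x : V) (hx : x ∈ X) : IsVertexSet 𝕜 (d + 1) (insert x σ) :=
      ((hXP x hx p₀ hp₀).of_insert ((Finset.card_insert_le x σ).trans_eq (by rw [hσ]))).2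
    obtain ⟨y, hyX, hy⟩ := exists_forall_isVertexSet_insert_insert hd (P := P ∪ X) (X := X)
      (fun p hp => (Finset.mem_union.mp hp).elim (hP p) (hXσ p)) (by rw [hX.card_eq]; omega)
    refine ⟨insert y X, hX.insert hyX, ?_, ?_⟩
    · refine Finset.forall_mem_insert _ _ _ |>.mpr ⟨fun p hp => ?_, hXP⟩
      exact Finset.insert_comm y p σ ▸ hy p (Finset.mem_union_left X hp)
    · rw [Finset.coe_insert]
      refine hXX.insert fun x hx _ => ?_
      have hyx := hy x (Finset.mem_union_right P hx)
      exact ⟨hyx, Finset.insert_comm y x σ ▸ hyx⟩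

end GeneralPosition

section Torque

variable {𝕜 V : Type*} [Field 𝕜] [AddCommGroup V] [Module 𝕜 V]

variable (𝕜) in
/-- The torque `x ∧ v` of a force `v` applied at `x`, encoded as the operator
`f ↦ f v • x - f x • v`. -/
def torque : V →ₗ[𝕜] V →ₗ[𝕜] Module.Dual 𝕜 V →ₗ[𝕜] V :=
  let tensor : V →ₗ[𝕜] V →ₗ[𝕜] Module.Dual 𝕜 V →ₗ[𝕜] V :=
    (LinearMap.smulRightₗ.flip).compl₂ (Module.Dual.eval 𝕜 V)
  tensor - tensor.flip

theorem torque_apply (x v : V) (f : Module.Dual 𝕜 V) : torque 𝕜 x v f = f v • x - f x • v := rfl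

theorem torque_self (x : V) : torque 𝕜 x x = 0 :=
  LinearMap.ext fun f => by rw [torque_apply, sub_self, LinearMap.zero_apply]

end Torque

section Coordinates

variable {𝕜 V κ Q : Type*} [Field 𝕜] [AddCommGroup V] [Module 𝕜 V] [Fintype κ]
  [AddCommGroup Q] [Module 𝕜 Q]

theorem sum_coord_linear_smul_sub (b : AffineBasis κ 𝕜 V) (v p : V) :
    ∑ a, (b.coord a).linear v • (b a - p) = v := by
  have hcoord (a : κ) : (b.coord a).linear v = b.coord a v - b.coord a 0 := by
    rw [← vsub_eq_sub (b.coord a v), ← AffineMap.linearMap_vsub, vsub_eq_sub, sub_zero]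
  simp only [hcoord, sub_smul, smul_sub, Finset.sum_sub_distrib, ← Finset.sum_smul,
    b.linear_combination_coord_eq_self, b.sum_coord_apply_eq_one, sub_zero, sub_self]

theorem sum_sum_smul_eq_zero_of_symm_of_antisymm [NeZero (2 : 𝕜)] {C : κ → κ → 𝕜} {E : κ → κ → Q}
    (hC : ∀ a c, C a c = C c a) (hE : ∀ a c, E a c = -E c a) : ∑ a, ∑ c, C a c • E a c = 0 := by
  have hneg : ∑ a, ∑ c, C a c • E a c = -∑ a, ∑ c, C a c • E a c :=
    calc ∑ a, ∑ c, C a c • E a c = ∑ a, ∑ c, C c a • E c a := Finset.sum_comm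
      _ = ∑ a, ∑ c, -(C a c • E a c) := Finset.sum_congr rfl fun a _ =>
        Finset.sum_congr rfl fun c _ => by rw [hC, hE c a, smul_neg]
      _ = -∑ a, ∑ c, C a c • E a c := by simp only [Finset.sum_neg_distrib]
  rw [← add_eq_zero_iff_eq_neg, ← two_smul 𝕜] at hneg
  exact (smul_eq_zero.mp hneg).resolve_left two_ne_zero

end Coordinates

section ExchangeInvariance

variable {𝕜 V Q : Type*} [Field 𝕜] [AddCommGroup V] [Module 𝕜 V] [AddCommGroup Q] [Module 𝕜 Q]
  {d : ℕ} {g : Finset V → V →ₗ[𝕜] Q}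

/-- The span of all `g t v` with `t` the vertex set of a `d`-simplex containing `Y`. -/
def starSpan (d : ℕ) (g : Finset V → V →ₗ[𝕜] Q) (Y : Finset V) : Submodule 𝕜 Q :=
  ⨆ t : {t // IsVertexSet 𝕜 (d + 1) t ∧ Y ⊆ t}, (g t).range

theorem apply_mem_starSpan (g : Finset V → V →ₗ[𝕜] Q) {t Y : Finset V}
    (ht : IsVertexSet 𝕜 (d + 1) t) (hYt : Y ⊆ t) (v : V) : g t v ∈ starSpan d g Y :=
  Submodule.mem_iSup_of_mem (p := fun t : {t // IsVertexSet 𝕜 (d + 1) t ∧ Y ⊆ t} => (g t).range)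
    ⟨t, ht, hYt⟩ (LinearMap.mem_range_self (g t) v)

theorem exists_sum_eq_of_mem_starSpan {Y : Finset V} {z : Q} (hz : z ∈ starSpan d g Y) :
    ∃ (T : Finset {t // IsVertexSet 𝕜 (d + 1) t ∧ Y ⊆ t}) (v : T → V), ∑ t : T, g t (v t) = z := by
  obtain ⟨T, hT⟩ := Submodule.mem_iSup_iff_exists_finset.mp hz
  obtain ⟨w, rfl⟩ := (Submodule.mem_iSup_finset_iff_exists_sum _ _).mp hT
  choose v hv using fun t => (w t).2
  exact ⟨T, fun t => v t, by simpa only [hv] using Finset.sum_coe_sort T fun t => (w t : Q)⟩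

variable [DecidableEq V]

/-- Let `g t v` stand for a force `v` applied to the simplex with vertex set `t`. The rule `g` is
exchange invariant if in every simplex with `d + 2` vertices a force parallel to the edge `pq` may
be moved from the facet opposite `q` to the facet opposite `p`. -/
def IsExchangeInvariant (d : ℕ) (g : Finset V → V →ₗ[𝕜] Q) : Prop :=
  ∀ t, IsVertexSet 𝕜 (d + 2) t → ∀ p ∈ t, ∀ q ∈ t, g (t.erase q) (q - p) = g (t.erase p) (q - p)

theorem isExchangeInvariant_torque_sum (d : ℕ) :
    IsExchangeInvariant d fun t : Finset V => torque 𝕜 (∑ x ∈ t, x) := fun t _ p hp q hq => by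
  rw [← sub_eq_zero, ← LinearMap.sub_apply, ← map_sub, Finset.sum_erase_eq_sub hp,
    Finset.sum_erase_eq_sub hq, sub_sub_sub_cancel_left, ← neg_sub, map_neg, LinearMap.neg_apply,
    torque_self, neg_zero]

namespace IsExchangeInvariant

theorem comp (hg : IsExchangeInvariant d g) {R : Type*} [AddCommGroup R] [Module 𝕜 R]
    (f : Q →ₗ[𝕜] R) : IsExchangeInvariant d fun t => f ∘ₗ g t :=
  fun t ht p hp q hq => congrArg f (hg t ht p hp q hq)

theorem prod (hg : IsExchangeInvariant d g) {R : Type*} [AddCommGroup R] [Module 𝕜 R]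
    {h : Finset V → V →ₗ[𝕜] R} (hh : IsExchangeInvariant d h) :
    IsExchangeInvariant d fun t => (g t).prod (h t) :=
  fun t ht p hp q hq => Prod.ext (hg t ht p hp q hq) (hh t ht p hp q hq)

theorem apply_insert_sub (hg : IsExchangeInvariant d g) {σ : Finset V} (hσ : σ.card = d) {p q : V}
    (h : IsVertexSet 𝕜 (d + 2) (insert p (insert q σ))) :
    g (insert p σ) (q - p) = g (insert q σ) (q - p) := by
  have hp := (h.of_insert ((Finset.card_insert_le q σ).trans_eq (by rw [hσ]))).1
  have h' := h
  rw [Finset.insert_comm] at h'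
  have hq := (h'.of_insert ((Finset.card_insert_le p σ).trans_eq (by rw [hσ]))).1
  have hexchange := hg _ h p (by simp) q (by simp)
  rwa [Finset.erase_insert hp, Finset.insert_comm, Finset.erase_insert hq] at hexchange

section Vanishing

variable {Y : Finset V} {y : V}
  (hvanish : ∀ t, IsVertexSet 𝕜 (d + 1) t → insert y Y ⊆ t → g t = 0)

include hvanish

theorem apply_sub_vertex_eq_zero (hg : IsExchangeInvariant d g) {t : Finset V}
    (ht : IsVertexSet 𝕜 (d + 1) t) (hYt : Y ⊆ t) (hy : y ∉ affineSpan 𝕜 (t : Set V)) {p : V}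
    (hp : p ∈ t \ Y) : g t (y - p) = 0 := by
  obtain ⟨hpt, hpY⟩ := Finset.mem_sdiff.mp hp
  have hyt : y ∉ t := fun h => hy (subset_affineSpan 𝕜 _ h)
  have hpT : p ∈ insert y t := Finset.mem_insert_of_mem hpt
  have hsub : insert y Y ⊆ (insert y t).erase p :=
    Finset.subset_erase.mpr ⟨Finset.insert_subset_insert y hYt, by aesop⟩
  have hexchange := hg _ (ht.insert hy) p hpT y (Finset.mem_insert_self y t)
  rwa [Finset.erase_insert hyt, hvanish _ ((ht.insert hy).erase hpT) hsub] at hexchange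

theorem apply_vertex_sub_vertex_eq_zero (hg : IsExchangeInvariant d g) {t : Finset V}
    (ht : IsVertexSet 𝕜 (d + 1) t) (hYt : Y ⊆ t) (hy : y ∉ affineSpan 𝕜 (t : Set V)) {p q : V}
    (hp : p ∈ t \ Y) (hq : q ∈ t \ Y) : g t (p - q) = 0 := by
  rw [← sub_sub_sub_cancel_left q p y, map_sub, apply_sub_vertex_eq_zero hvanish hg ht hYt hy hq,
    apply_sub_vertex_eq_zero hvanish hg ht hYt hy hp, sub_zero]

theorem apply_erase_sub_eq_zero [NeZero (2 : 𝕜)] (hg : IsExchangeInvariant d g) {t : Finset V}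
    (ht : IsVertexSet 𝕜 (d + 2) t) (hYt : Y ⊆ t) (hy : y ∉ affineSpan 𝕜 (t : Set V)) {a b c : V}
    (ha : a ∈ t \ Y) (hb : b ∈ t \ Y) (hc : c ∈ t \ Y) (hab : a ≠ b) (hac : a ≠ c) (hbc : b ≠ c) :
    g (t.erase c) (c - a) = 0 := by
  have hshift {x p q r : V} (hx : x ∈ t \ Y) (hp : p ∈ t \ Y) (hq : q ∈ t \ Y) (hpx : p ≠ x)
      (hqx : q ≠ x) : g (t.erase x) (p - r) = g (t.erase x) (q - r) := by
    obtain ⟨hxt, hxY⟩ := Finset.mem_sdiff.mp hx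
    rw [← sub_eq_zero, ← map_sub, sub_sub_sub_cancel_right]
    refine apply_vertex_sub_vertex_eq_zero hvanish hg (ht.erase hxt)
      (Finset.subset_erase.mpr ⟨hYt, hxY⟩)
      (fun h => hy (affineSpan_mono 𝕜 (Finset.coe_subset.mpr (Finset.erase_subset x t)) h)) ?_ ?_
    · aesop
    · aesop
  have hmove {p q : V} (hp : p ∈ t \ Y) (hq : q ∈ t \ Y) :
      g (t.erase q) (q - p) = g (t.erase p) (q - p) :=
    hg t ht p (Finset.mem_sdiff.mp hp).1 q (Finset.mem_sdiff.mp hq).1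
  have hneg : g (t.erase c) (c - a) = -g (t.erase c) (c - a) :=
    calc g (t.erase c) (c - a) = g (t.erase a) (c - a) := hmove ha hc
      _ = g (t.erase a) (b - a) := hshift ha hc hb hac.symm hab.symm
      _ = g (t.erase b) (b - a) := (hmove ha hb).symm
      _ = g (t.erase b) (b - c) := by
        rw [← neg_sub, map_neg, hshift hb ha hc hab hbc.symm, ← map_neg, neg_sub]
      _ = g (t.erase c) (b - c) := hmove hc hb
      _ = g (t.erase c) (a - c) := hshift hc hb ha hbc hac
      _ = -g (t.erase c) (c - a) := by rw [← map_neg, neg_sub]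
  rw [← add_eq_zero_iff_eq_neg, ← two_smul 𝕜] at hneg
  exact (smul_eq_zero.mp hneg).resolve_left two_ne_zero

theorem eq_zero_of_notMem_affineSpan [Infinite 𝕜] [NeZero (2 : 𝕜)]
    (hg : IsExchangeInvariant d g) (hd : d + 2 ≤ Module.finrank 𝕜 V) {t : Finset V}
    (ht : IsVertexSet 𝕜 (d + 1) t) (hYt : Y ⊆ t) (hY : Y.card < d)
    (hy : y ∉ affineSpan 𝕜 (t : Set V)) : g t = 0 := by
  obtain ⟨a, ha, b, hb, hab⟩ : ∃ a ∈ t \ Y, ∃ b ∈ t \ Y, a ≠ b := by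
    rw [← Finset.one_lt_card, Finset.card_sdiff_of_subset hYt, ht.card_eq]
    omega
  rw [← LinearMap.ker_eq_top]
  by_contra hker
  have hmk : AffineSubspace.mk' a (g t).ker ≠ ⊤ := fun htop => hker <| by
    rw [← AffineSubspace.direction_mk' a (g t).ker, htop, AffineSubspace.direction_top]
  have hspan : affineSpan 𝕜 ((insert y t : Finset V) : Set V) ≠ ⊤ :=
    affineSpan_finset_ne_top ((ht.insert hy).card_eq.trans_le hd)
  obtain ⟨c, hc⟩ := exists_forall_notMem_affineSubspace
    ![affineSpan 𝕜 ((insert y t : Finset V) : Set V), AffineSubspace.mk' a (g t).ker]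
    (Fin.forall_fin_two.mpr ⟨hspan, hmk⟩)
  obtain ⟨hcy, hca⟩ := Fin.forall_fin_two.mp hc
  have hct : c ∉ affineSpan 𝕜 (t : Set V) := fun h =>
    hcy (affineSpan_mono 𝕜 (Finset.coe_subset.mpr (Finset.subset_insert y t)) h)
  have hct' : c ∉ t := fun h => hct (subset_affineSpan 𝕜 _ h)
  have hsdiff {x : V} (hx : x ∈ t \ Y) : x ∈ insert c t \ Y ∧ x ≠ c := by
    obtain ⟨hxt, hxY⟩ := Finset.mem_sdiff.mp hx
    exact ⟨by simp [hxt, hxY], fun h => hct' (h ▸ hxt)⟩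
  have hcY : c ∈ insert c t \ Y :=
    Finset.mem_sdiff.mpr ⟨Finset.mem_insert_self c t, fun h => hct' (hYt h)⟩
  have hzero := apply_erase_sub_eq_zero hvanish hg (ht.insert hct)
    (hYt.trans (Finset.subset_insert c t)) (ht.notMem_affineSpan_insert_comm hy hcy)
    (hsdiff ha).1 (hsdiff hb).1 hcY hab (hsdiff ha).2 (hsdiff hb).2
  rw [Finset.erase_insert hct'] at hzero
  exact hca (AffineSubspace.mem_mk'.mpr hzero)

end Vanishing

section Star

variable {σ : Finset V} {ι κ : Type*} [Fintype ι] (b : AffineBasis κ 𝕜 V)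

theorem apply_insert_eq_sum_affineBasis [Fintype κ] (hg : IsExchangeInvariant d g)
    (hσ : σ.card = d) {p : V}
    (hp : ∀ a, IsVertexSet 𝕜 (d + 2) (insert p (insert (b a) σ))) (v : V) :
    g (insert p σ) v = ∑ a, (b.coord a).linear v • g (insert (b a) σ) (b a - p) :=
  calc g (insert p σ) v = g (insert p σ) (∑ a, (b.coord a).linear v • (b a - p)) := by
        rw [sum_coord_linear_smul_sub]
    _ = ∑ a, (b.coord a).linear v • g (insert (b a) σ) (b a - p) := by
        simp only [map_sum, map_smul, hg.apply_insert_sub hσ (hp _)]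

theorem sum_apply_insert_eq_zero_of_affineBasis [NeZero (2 : 𝕜)] [Finite κ]
    (hg : IsExchangeInvariant d g) (hσ : σ.card = d) {p v : ι → V}
    (hbp : ∀ i a, IsVertexSet 𝕜 (d + 2) (insert (p i) (insert (b a) σ)))
    (hbb : Pairwise fun a c => IsVertexSet 𝕜 (d + 2) (insert (b a) (insert (b c) σ)))
    (hv : ∑ i, v i = 0) (hpv : ∑ i, torque 𝕜 (p i) (v i) = 0) :
    ∑ i, g (insert (p i) σ) (v i) = 0 := by
  have := Fintype.ofFinite κ
  let u (a : κ) : V := ∑ i, (b.coord a).linear (v i) • p i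
  have hsum (a : κ) : ∑ i, (b.coord a).linear (v i) = 0 := by rw [← map_sum, hv, map_zero]
  have hsymm (a c : κ) : (b.coord c).linear (u a) = (b.coord a).linear (u c) := by
    have h := congrArg (b.coord c).linear (LinearMap.congr_fun hpv (b.coord a).linear)
    simp only [LinearMap.sum_apply, torque_apply, Finset.sum_sub_distrib, map_sub, map_sum,
      map_smul, LinearMap.zero_apply, map_zero, sub_eq_zero] at h
    simpa only [u, map_sum, map_smul, smul_eq_mul, mul_comm] using h
  have hanti (a c : κ) : g (insert (b a) σ) (b c - b a) = -g (insert (b c) σ) (b a - b c) := by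
    obtain rfl | hac := eq_or_ne a c
    · simp only [sub_self, map_zero, neg_zero]
    · rw [hg.apply_insert_sub hσ (hbb hac), ← map_neg, neg_sub]
  calc ∑ i, g (insert (p i) σ) (v i)
      = ∑ a, g (insert (b a) σ) (∑ i, (b.coord a).linear (v i) • (b a - p i)) := by
        simp only [hg.apply_insert_eq_sum_affineBasis b hσ (hbp _), map_sum, map_smul]
        exact Finset.sum_comm
    _ = -∑ a, g (insert (b a) σ) (u a) := by
        simp only [smul_sub, Finset.sum_sub_distrib, ← Finset.sum_smul, hsum, zero_smul, zero_sub,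
          map_neg, Finset.sum_neg_distrib, u]
    _ = -∑ a, ∑ c, (b.coord c).linear (u a) • g (insert (b a) σ) (b c - b a) := by
        simp only [← map_smul, ← map_sum, sum_coord_linear_smul_sub]
    _ = 0 := by rw [sum_sum_smul_eq_zero_of_symm_of_antisymm hsymm hanti, neg_zero]

theorem sum_apply_insert_eq_zero [Infinite 𝕜] [NeZero (2 : 𝕜)] (hg : IsExchangeInvariant d g)
    (hd : d + 1 ≤ Module.finrank 𝕜 V) (hσ : σ.card = d) {p v : ι → V}
    (hp : ∀ i, IsVertexSet 𝕜 (d + 1) (insert (p i) σ)) (hv : ∑ i, v i = 0)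
    (hpv : ∑ i, torque 𝕜 (p i) (v i) = 0) : ∑ i, g (insert (p i) σ) (v i) = 0 := by
  cases isEmpty_or_nonempty ι
  · simp
  have : FiniteDimensional 𝕜 V := FiniteDimensional.of_finrank_pos (by omega)
  obtain ⟨X, hX, hXp, hXX⟩ := exists_isVertexSet_pairwise_insert_insert hd hσ
    (P := Finset.univ.image p) (by simp) (by simpa using hp) le_rfl
  have htop : affineSpan 𝕜 (Set.range ((↑) : X → V)) = ⊤ := by
    rw [hX.affineIndependent.affineSpan_eq_top_iff_card_eq_finrank_add_one, Fintype.card_coe,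
      hX.card_eq]
  let b : AffineBasis X 𝕜 V := ⟨(↑), hX.affineIndependent, htop⟩
  exact hg.sum_apply_insert_eq_zero_of_affineBasis b hσ (fun i a => hXp a a.2 _ (by simp))
    (fun a c hac => hXX a.2 c.2 (Subtype.coe_ne_coe.mpr hac)) hv hpv

end Star

theorem exists_mem_starSpan_insert [Infinite 𝕜] [NeZero (2 : 𝕜)] (hg : IsExchangeInvariant d g)
    (hd : d + 2 ≤ Module.finrank 𝕜 V) {Y : Finset V} (hY : Y.card < d) {z : Q}
    (hz : z ∈ starSpan d g Y) : ∃ y ∉ Y, z ∈ starSpan d g (insert y Y) := by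
  obtain ⟨T, v, rfl⟩ := exists_sum_eq_of_mem_starSpan hz
  obtain ⟨y, hy⟩ := exists_forall_notMem_affineSpan (𝕜 := 𝕜)
    (fun o : Option T => o.elim Y fun t => t)
    (Option.forall.mpr ⟨show Y.card ≤ _ by omega, fun t => t.1.2.1.card_eq.trans_le (by omega)⟩)
  refine ⟨y, fun h => hy none (subset_affineSpan 𝕜 _ h), Submodule.sum_mem _ fun t _ => ?_⟩
  have hzero := (hg.comp (starSpan d g (insert y Y)).mkQ).eq_zero_of_notMem_affineSpan
    (fun t ht hYt => LinearMap.ext fun v =>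
      (Submodule.Quotient.mk_eq_zero _).mpr (apply_mem_starSpan g ht hYt v))
    hd t.1.2.1 t.1.2.2 hY (hy (some t))
  exact (Submodule.Quotient.mk_eq_zero _).mp (LinearMap.congr_fun hzero (v t))

theorem exists_card_eq_mem_starSpan [Infinite 𝕜] [NeZero (2 : 𝕜)] (hg : IsExchangeInvariant d g)
    (hd : d + 2 ≤ Module.finrank 𝕜 V) {z : Q} (hz : z ∈ starSpan d g ∅) {m : ℕ} (hm : m ≤ d) :
    ∃ Y : Finset V, Y.card = m ∧ z ∈ starSpan d g Y := by
  induction m with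
  | zero => exact ⟨∅, rfl, hz⟩
  | succ m ih =>
    obtain ⟨Y, hY, hzY⟩ := ih (by omega)
    obtain ⟨y, hyY, hzy⟩ := hg.exists_mem_starSpan_insert hd (by omega) hzY
    exact ⟨insert y Y, by rw [Finset.card_insert_of_notMem hyY, hY], hzy⟩

theorem sum_apply_eq_zero_of_subset [Infinite 𝕜] [NeZero (2 : 𝕜)] (hg : IsExchangeInvariant d g)
    (hd : d + 1 ≤ Module.finrank 𝕜 V) {Y : Finset V} (hY : Y.card = d) {ι : Type*} [Fintype ι]
    {t : ι → Finset V} {v : ι → V} (ht : ∀ i, IsVertexSet 𝕜 (d + 1) (t i)) (hYt : ∀ i, Y ⊆ t i)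
    (hv : ∑ i, v i = 0) (htv : ∑ i, torque 𝕜 (∑ x ∈ t i, x) (v i) = 0) :
    ∑ i, g (t i) (v i) = 0 := by
  have hinsert (i : ι) : ∃ p ∉ Y, insert p Y = t i :=
    Finset.exists_eq_insert_iff.mpr ⟨hYt i, by rw [hY, (ht i).card_eq]⟩
  choose p hpY hp using hinsert
  obtain rfl : (fun i => insert (p i) Y) = t := funext hp
  refine hg.sum_apply_insert_eq_zero hd hY ht hv ?_
  simpa only [Finset.sum_insert (hpY _), map_add, LinearMap.add_apply, Finset.sum_add_distrib,
    ← map_sum, hv, map_zero, add_zero] using htv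

theorem sum_apply_eq_zero [Infinite 𝕜] [NeZero (2 : 𝕜)] (hg : IsExchangeInvariant d g)
    (hd : d + 2 ≤ Module.finrank 𝕜 V) {ι : Type*} [Fintype ι] {t : ι → Finset V} {v : ι → V}
    (ht : ∀ i, IsVertexSet 𝕜 (d + 1) (t i)) (hv : ∑ i, v i = 0)
    (htv : ∑ i, torque 𝕜 (∑ x ∈ t i, x) (v i) = 0) : ∑ i, g (t i) (v i) = 0 := by
  let G (t : Finset V) := (g t).prod (LinearMap.id.prod (torque 𝕜 (∑ x ∈ t, x)))
  have hG : IsExchangeInvariant d G := hg.prod (IsExchangeInvariant.prod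
    (fun _ _ _ _ _ _ => rfl) (isExchangeInvariant_torque_sum d))
  have hz : ∑ i, G (t i) (v i) ∈ starSpan d G ∅ :=
    Submodule.sum_mem _ fun i _ => apply_mem_starSpan G (ht i) (Finset.empty_subset _) (v i)
  obtain ⟨Y, hY, hzY⟩ := hG.exists_card_eq_mem_starSpan hd hz le_rfl
  obtain ⟨T, w, hw⟩ := exists_sum_eq_of_mem_starSpan hzY
  simp only [G, LinearMap.prod_apply, Function.prod_apply, Prod.ext_iff, Prod.fst_sum,
    Prod.snd_sum, LinearMap.id_apply, hv, htv] at hw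
  rw [← hw.1]
  exact hg.sum_apply_eq_zero_of_subset (by omega) hY (fun t => t.1.2.1) (fun t => t.1.2.2) hw.2.1
    hw.2.2

end IsExchangeInvariant

end ExchangeInvariance

section Gram

variable {E ι κ : Type*} [NormedAddCommGroup E] [InnerProductSpace ℝ E] [Fintype κ]

theorem gram_sum_smul (P : Matrix ι κ ℝ) (Z : κ → E) :
    gram ℝ (fun i => ∑ j, P i j • Z j) = P * gram ℝ Z * Pᵀ := by
  ext i j
  simp only [mul_apply, gram_apply, transpose_apply, sum_inner, inner_sum, real_inner_smul_left,
    real_inner_smul_right, Finset.sum_mul]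
  exact Finset.sum_congr rfl fun x _ => Finset.sum_congr rfl fun y _ => by ring

variable [DecidableEq κ]

theorem det_gram_sum_smul (P : Matrix κ κ ℝ) (Z : κ → E) :
    (gram ℝ fun i => ∑ j, P i j • Z j).det = P.det ^ 2 * (gram ℝ Z).det := by
  rw [gram_sum_smul, det_mul, det_mul, det_transpose]
  ring

theorem det_gram_sumElim_sub_neg (Y : κ → E) (w : E) :
    (gram ℝ (Sum.elim (fun i => Y i - w) fun _ : Unit => -w)).det
      = (gram ℝ (Sum.elim Y fun _ : Unit => w)).det := by
  let P : Matrix (κ ⊕ Unit) (κ ⊕ Unit) ℝ := fromBlocks 1 (of fun _ _ => -1) 0 (-1)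
  have hP : (fun i => ∑ j, P i j • Sum.elim Y (fun _ : Unit => w) j)
      = Sum.elim (fun i => Y i - w) fun _ => -w := by
    ext (i | i) <;> simp [P, Fintype.sum_sum_type, one_apply, sub_eq_add_neg]
  rw [← hP, det_gram_sum_smul, det_fromBlocks_zero₂₁, det_one, one_mul, det_unique, neg_apply,
    one_apply_eq, neg_one_sq, one_mul]

theorem det_gram_sumElim_unit_of_orthogonal {Y : κ → E} {u : E} (hu : ‖u‖ = 1)
    (hY : ∀ i, ⟪u, Y i⟫ = 0) :
    (gram ℝ (Sum.elim Y fun _ : Unit => u)).det = (gram ℝ Y).det := by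
  have hblocks : gram ℝ (Sum.elim Y fun _ : Unit => u) = fromBlocks (gram ℝ Y) 0 0 1 := by
    ext (i | i) (j | j) <;> simp [gram_apply, real_inner_comm, hY, hu]
  rw [hblocks, det_fromBlocks_zero₂₁, det_one, mul_one]

theorem det_gram_sumElim_of_orthogonal {Y : κ → E} {u w : E} (hu : ‖u‖ = 1)
    (hY : ∀ i, ⟪u, Y i⟫ = 0) (hspan : u ∈ Submodule.span ℝ (insert w (Set.range Y))) :
    (gram ℝ (Sum.elim Y fun _ : Unit => w)).det = ⟪u, w⟫ ^ 2 * (gram ℝ Y).det := by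
  obtain ⟨b, z, hz, hbz⟩ := Submodule.mem_span_insert.mp hspan
  obtain ⟨a, rfl⟩ := (Submodule.mem_span_range_iff_exists_fun ℝ).mp hz
  have hb : b * ⟪u, w⟫ = 1 := by
    have huu : ⟪u, b • w + ∑ i, a i • Y i⟫ = 1 := by
      rw [← hbz, real_inner_self_eq_norm_sq, hu, one_pow]
    simpa [inner_add_right, inner_sum, real_inner_smul_right, hY] using huu
  let P : Matrix (κ ⊕ Unit) (κ ⊕ Unit) ℝ := fromBlocks 1 0 (of fun _ i => a i) (of fun _ _ => b)
  have hP : (fun i => ∑ j, P i j • Sum.elim Y (fun _ : Unit => w) j)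
      = Sum.elim Y fun _ => u := by
    ext (i | i) <;> simp [P, Fintype.sum_sum_type, one_apply, hbz, add_comm]
  have hdet : (gram ℝ Y).det = b ^ 2 * (gram ℝ (Sum.elim Y fun _ : Unit => w)).det := by
    rw [← det_gram_sumElim_unit_of_orthogonal hu hY, ← hP, det_gram_sum_smul,
      det_fromBlocks_zero₁₂, det_one, one_mul, det_unique, of_apply]
  rw [hdet, ← mul_assoc, ← mul_pow, mul_comm ⟪u, w⟫, hb, one_pow, one_mul]

end Gram

section SimplexMeasure

/-- The simplex in `EuclideanSpace ℝ ι` spanned by the origin and the standard basis vectors: every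
simplex with `card ι + 1` vertices is an affine image of it. -/
def cornerSimplex (ι : Type*) [Fintype ι] : Set (EuclideanSpace ℝ ι) :=
  convexHull ℝ (insert 0 (Set.range (EuclideanSpace.basisFun ι ℝ)))

theorem interior_cornerSimplex_nonempty (ι : Type*) [Fintype ι] :
    (interior (cornerSimplex ι)).Nonempty := by
  have hspan := (EuclideanSpace.basisFun ι ℝ).toBasis.span_eq
  rw [OrthonormalBasis.coe_toBasis] at hspan
  rw [cornerSimplex, interior_convexHull_nonempty_iff_affineSpan_eq_top,
    ← AffineSubspace.coe_eq_univ_iff, affineSpan_insert_zero, hspan, Submodule.top_coe]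

theorem toReal_hausdorffMeasure_cornerSimplex_pos (ι : Type*) [Fintype ι] :
    0 < (μH[Fintype.card ι] (cornerSimplex ι)).toReal := by
  have hHaar : (μH[Fintype.card ι] : Measure (EuclideanSpace ℝ ι)).IsAddHaarMeasure := by
    have h := (inferInstance : (μH[Module.finrank ℝ (EuclideanSpace ℝ ι)] :
      Measure (EuclideanSpace ℝ ι)).IsAddHaarMeasure)
    rwa [finrank_euclideanSpace] at h
  have hcompact : IsCompact (cornerSimplex ι) :=
    ((Set.finite_range _).insert 0).isCompact_convexHull ℝ
  exact ENNReal.toReal_pos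
    (Measure.measure_pos_of_nonempty_interior _ (interior_cornerSimplex_nonempty ι)).ne'
    hcompact.measure_ne_top

variable {E ι : Type*} [NormedAddCommGroup E] [InnerProductSpace ℝ E] [Fintype ι]

open scoped Pointwise in
theorem convexHull_insert_range_eq_vadd_image (p : E) (y : ι → E) :
    convexHull ℝ (insert p (Set.range y)) = p +ᵥ
      ((EuclideanSpace.basisFun ι ℝ).toBasis.constr ℝ fun i => y i - p) '' cornerSimplex ι := by
  have hrange : p +ᵥ Set.range (fun i => y i - p) = Set.range y := by
    simp [Set.vadd_set_range]
  rw [cornerSimplex, ← OrthonormalBasis.coe_toBasis, LinearMap.image_convexHull, ← convexHull_vadd,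
    Set.image_insert_eq, map_zero, ← Set.range_comp, Set.vadd_set_insert]
  simp only [Function.comp_def, Module.Basis.constr_basis, vadd_eq_add, add_zero, hrange]

variable [MeasurableSpace E] [BorelSpace E]

theorem toReal_hausdorffMeasure_convexHull_insert_range [DecidableEq ι] {d : ℕ}
    (hd : Fintype.card ι = d) (p : E) (y : ι → E) :
    (μH[d] (convexHull ℝ (insert p (Set.range y)))).toReal
      = √(gram ℝ fun i => y i - p).det * (μH[d] (cornerSimplex ι)).toReal := by
  let f : EuclideanSpace ℝ ι →ₗ[ℝ] E :=
    (EuclideanSpace.basisFun ι ℝ).toBasis.constr ℝ fun i => y i - p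
  have hf (i : ι) : f (EuclideanSpace.basisFun ι ℝ i) = y i - p := by
    rw [← OrthonormalBasis.coe_toBasis, Module.Basis.constr_basis]
  have hnormDet : f.normDet = √(gram ℝ fun i => y i - p).det := by
    have hsq := f.normDet_sq_eq_det_gram (EuclideanSpace.basisFun ι ℝ)
    simp only [hf, RCLike.ofReal_real_eq_id, id_eq] at hsq
    rw [← hsq, Real.sqrt_sq f.normDet_nonneg]
  have himage := f.hausdorffMeasure_image (cornerSimplex ι)
  rw [finrank_euclideanSpace, hd] at himage
  rw [convexHull_insert_range_eq_vadd_image, hausdorffMeasure_vadd p (Or.inl (Nat.cast_nonneg _)),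
    himage, ENNReal.toReal_mul, ENNReal.toReal_ofReal f.normDet_nonneg, hnormDet]

theorem toReal_hausdorffMeasure_convexHull_range_pos {b : ι → E} (hb : AffineIndependent ℝ b)
    {d : ℕ} (hd : Fintype.card ι = d + 1) : 0 < (μH[d] (convexHull ℝ (Set.range b))).toReal := by
  classical
  obtain ⟨i⟩ : Nonempty ι := Fintype.card_pos_iff.mp (by omega)
  have hrange : Set.range b = insert (b i) (Set.range fun j : {j // j ≠ i} => b j) := by
    rw [← Set.image_univ, ← Set.union_compl_self {i}, Set.image_union, Set.image_singleton,
      Set.singleton_union, Set.image_eq_range]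
    rfl
  have hcard : Fintype.card {j // j ≠ i} = d := by
    rw [Fintype.card_subtype_compl, Fintype.card_subtype_eq, hd, Nat.add_sub_cancel]
  have hindep := (affineIndependent_iff_linearIndependent_vsub ℝ b i).mp hb
  rw [hrange, toReal_hausdorffMeasure_convexHull_insert_range hcard, ← hcard]
  exact mul_pos (Real.sqrt_pos.mpr (posDef_gram_of_linearIndependent hindep).det_pos)
    (toReal_hausdorffMeasure_cornerSimplex_pos _)

end SimplexMeasure

section Conormal

theorem exists_norm_eq_one_mem_orthogonal_inner_neg {E : Type*} [NormedAddCommGroup E]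
    [InnerProductSpace ℝ E] (D : Submodule ℝ E) [D.HasOrthogonalProjection] {u : E} (hu : u ∉ D) :
    ∃ v ∈ Dᗮ, ‖v‖ = 1 ∧ v ∈ D ⊔ Submodule.span ℝ {u} ∧ ⟪v, u⟫ < 0 := by
  let r := D.starProjection u - u
  have hr : r ∈ Dᗮ := by
    simpa only [r, neg_sub] using neg_mem (D.sub_starProjection_mem_orthogonal u)
  have hr0 : r ≠ 0 := fun h => hu (sub_eq_zero.mp h ▸ D.starProjection_apply_mem u)
  have hru : ⟪r, u⟫ = -‖r‖ ^ 2 := by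
    have hproj := Submodule.inner_left_of_mem_orthogonal (D.starProjection_apply_mem u) hr
    rw [← real_inner_self_eq_norm_sq, inner_sub_right, hproj, zero_sub, neg_neg]
  refine ⟨‖r‖⁻¹ • r, Dᗮ.smul_mem _ hr, norm_smul_inv_norm hr0, Submodule.smul_mem _ _ ?_, ?_⟩
  · exact sub_mem (Submodule.mem_sup_left (D.starProjection_apply_mem u))
      (Submodule.mem_sup_right (Submodule.mem_span_singleton_self u))
  · rw [real_inner_smul_left, hru]
    have hnorm : 0 < ‖r‖ := norm_pos_iff.mpr hr0
    exact mul_neg_of_pos_of_neg (inv_pos.mpr hnorm) (neg_lt_zero.mpr (pow_pos hnorm 2))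

theorem bary_sub_mem_vectorSpan {n : ℕ} {ι : Type*} [Fintype ι] (b : ι → Euc n) (j : ι) :
    bary b - b j ∈ vectorSpan ℝ (Set.range b) := by
  have hcard : (Fintype.card ι : ℝ) ≠ 0 := by
    have : Nonempty ι := ⟨j⟩
    exact_mod_cast Fintype.card_ne_zero
  have hmean : bary b - b j = (Fintype.card ι : ℝ)⁻¹ • ∑ l, (b l - b j) := by
    rw [Finset.sum_sub_distrib, smul_sub, bary, Finset.sum_const, Finset.card_univ,
      ← Nat.cast_smul_eq_nsmul ℝ, smul_smul, inv_mul_cancel₀ hcard, one_smul]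
  rw [hmean]
  exact Submodule.smul_mem _ _ (Submodule.sum_mem _ fun l _ =>
    vsub_mem_vectorSpan ℝ (Set.mem_range_self l) (Set.mem_range_self j))

variable {n K : ℕ}

theorem range_face (b : Fin K → Euc n) (i : Fin K) : Set.range (face b i) = b '' {i}ᶜ :=
  (Set.image_eq_range b {i}ᶜ).symm

theorem exists_isConormal {b : Fin (K + 2) → Euc n} (hb : AffineIndependent ℝ b)
    (i : Fin (K + 2)) : ∃ v, IsConormal b i v := by
  obtain ⟨j, hj⟩ := exists_ne i
  have hbj : b j ∈ affineSpan ℝ (Set.range (face b i)) := mem_affineSpan ℝ ⟨⟨j, hj⟩, rfl⟩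
  have hedge : b i - b j ∉ vectorSpan ℝ (Set.range (face b i)) := fun h => by
    rw [← direction_affineSpan, ← vsub_eq_sub,
      AffineSubspace.vsub_right_mem_direction_iff_mem hbj, range_face, hb.mem_affineSpan_iff] at h
    exact h rfl
  obtain ⟨v, hv, hnorm, hspan, hneg⟩ := exists_norm_eq_one_mem_orthogonal_inner_neg _ hedge
  have hvface (w : Euc n) (hw : w ∈ vectorSpan ℝ (Set.range (face b i))) : ⟪v, w⟫ = 0 :=
    Submodule.inner_left_of_mem_orthogonal hw hv
  refine ⟨v, ?_, hnorm, hvface, ?_⟩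
  · refine (sup_le (vectorSpan_mono ℝ ?_) ?_ : _ ≤ vectorSpan ℝ (Set.range b)) hspan
    · rw [range_face]
      exact Set.image_subset_range b _
    · rw [Submodule.span_singleton_le_iff_mem]
      exact vsub_mem_vectorSpan ℝ (Set.mem_range_self i) (Set.mem_range_self j)
  · have hbary : ⟪v, bary (face b i) - b j⟫ = 0 :=
      hvface _ (bary_sub_mem_vectorSpan (face b i) ⟨j, hj⟩)
    rwa [← sub_sub_sub_cancel_right _ _ (b j), inner_sub_right, hbary, sub_zero]

theorem isConormal_conormal {b : Fin (K + 2) → Euc n} (hb : AffineIndependent ℝ b)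
    (i : Fin (K + 2)) : IsConormal b i (conormal b i) := by
  rw [conormal, dif_pos (exists_isConormal hb i)]
  exact (exists_isConormal hb i).choose_spec

namespace IsConormal

variable {b : Fin K → Euc n} {i j l : Fin K} {v : Euc n}

theorem inner_sub_eq_zero (h : IsConormal b i v) (hj : j ≠ i) (hl : l ≠ i) :
    ⟪v, b j - b l⟫ = 0 :=
  h.2.2.1 _ (vsub_mem_vectorSpan ℝ ⟨⟨j, hj⟩, rfl⟩ ⟨⟨l, hl⟩, rfl⟩)

theorem inner_sub_neg (h : IsConormal b i v) (hj : j ≠ i) : ⟪v, b i - b j⟫ < 0 := by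
  have hbary : ⟪v, bary (face b i) - b j⟫ = 0 :=
    h.2.2.1 _ (bary_sub_mem_vectorSpan (face b i) ⟨j, hj⟩)
  rw [← sub_add_sub_cancel _ (bary (face b i)), inner_add_right, hbary, add_zero]
  exact h.2.2.2

theorem mem_span_edges (h : IsConormal b i v) {S : Finset (Fin K)} (hS : S = {i, j}ᶜ) :
    v ∈ Submodule.span ℝ (insert (b i - b j) (Set.range fun m : S => b m - b j)) := by
  have hmem := h.1
  rw [vectorSpan_range_eq_span_range_vsub_right ℝ b j] at hmem
  refine Submodule.span_le.mpr ?_ hmem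
  rintro _ ⟨m, rfl⟩
  obtain rfl | hmi := eq_or_ne m i
  · exact Submodule.subset_span (Set.mem_insert _ _)
  obtain rfl | hmj := eq_or_ne m j
  · simp
  · exact Submodule.subset_span (Or.inr ⟨⟨m, by simp [hS, hmi, hmj]⟩, rfl⟩)

theorem det_gram_edges (h : IsConormal b i v) (hij : i ≠ j) {S : Finset (Fin K)}
    (hS : S = {i, j}ᶜ) :
    (gram ℝ (Sum.elim (fun m : S => b m - b j) fun _ : Unit => b i - b j)).det
      = ⟪v, b i - b j⟫ ^ 2 * (gram ℝ fun m : S => b m - b j).det := by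
  refine det_gram_sumElim_of_orthogonal h.2.1 (fun m => ?_) (h.mem_span_edges hS)
  have hmi : (m : Fin K) ≠ i := fun hmi => by simpa [hS, hmi] using m.2
  exact h.inner_sub_eq_zero hmi hij.symm

end IsConormal

theorem range_face_eq_insert (b : Fin K → Euc n) {i j : Fin K} (hij : i ≠ j) {S : Finset (Fin K)}
    (hS : S = {i, j}ᶜ) : Set.range (face b i) = insert (b j) (Set.range fun m : S => b m) := by
  have hcompl : ({i}ᶜ : Set (Fin K)) = insert j (S : Set (Fin K)) := by
    ext m
    obtain rfl | hmj := eq_or_ne m j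
    · simp [hij.symm]
    · simp [hS, hmj]
  rw [range_face, hcompl, Set.image_insert_eq, Set.image_eq_range]
  rfl

theorem IsConormal.toReal_hausdorffMeasure_face_mul_inner {b : Fin (K + 2) → Euc n}
    {i j : Fin (K + 2)} {v : Euc n} (h : IsConormal b i v) (hij : i ≠ j)
    {S : Finset (Fin (K + 2))} (hS : S = {i, j}ᶜ) :
    (μH[K] (simplexSet (face b i))).toReal * ⟪v, b i - b j⟫
      = -(√(gram ℝ (Sum.elim (fun m : S => b m - b j) fun _ : Unit => b i - b j)).det
        * (μH[K] (cornerSimplex S)).toReal) := by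
  have hcard : Fintype.card S = K := by
    rw [Fintype.card_coe, hS, Finset.card_compl, Finset.card_pair hij, Fintype.card_fin,
      Nat.add_sub_cancel]
  rw [h.det_gram_edges hij hS, Real.sqrt_mul (sq_nonneg _), Real.sqrt_sq_eq_abs,
    abs_of_neg (h.inner_sub_neg hij.symm), simplexSet, range_face_eq_insert b hij hS,
    toReal_hausdorffMeasure_convexHull_insert_range hcard]
  ring

theorem IsConormal.toReal_hausdorffMeasure_face_mul_inner_comm {b : Fin (K + 2) → Euc n}
    {i j : Fin (K + 2)} {u v : Euc n} (hu : IsConormal b i u) (hv : IsConormal b j v)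
    (hij : i ≠ j) :
    (μH[K] (simplexSet (face b i))).toReal * ⟪u, b i - b j⟫
      = (μH[K] (simplexSet (face b j))).toReal * ⟪v, b j - b i⟫ := by
  have hrebase := det_gram_sumElim_sub_neg
    (fun m : ({i, j}ᶜ : Finset (Fin (K + 2))) => b m - b j) (b i - b j)
  simp only [sub_sub_sub_cancel_right, neg_sub] at hrebase
  rw [hu.toReal_hausdorffMeasure_face_mul_inner hij rfl,
    hv.toReal_hausdorffMeasure_face_mul_inner hij.symm (by rw [Finset.pair_comm]), hrebase]

end Conormal

section Beam

theorem matVec_rankOne {n : ℕ} (w v : Euc n) : matVec (rankOne w) v = ⟪v, w⟫ • w := by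
  ext i
  simp only [matVec, rankOne, toLpLin_apply, mulVec, dotProduct, of_apply, PiLp.smul_apply,
    PiLp.inner_apply, smul_eq_mul, Finset.sum_mul, RCLike.inner_apply, conj_trivial]
  exact Finset.sum_congr rfl fun j _ => by ring

theorem matVec_wedge {n : ℕ} (x v u : Euc n) :
    matVec (wedge x v) u = ⟪u, v⟫ • x - ⟪u, x⟫ • v := by
  ext i
  simp only [matVec, wedge, toLpLin_apply, mulVec, dotProduct, of_apply, PiLp.smul_apply,
    PiLp.sub_apply, PiLp.inner_apply, smul_eq_mul, Finset.sum_mul, RCLike.inner_apply,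
    conj_trivial, ← Finset.sum_sub_distrib]
  exact Finset.sum_congr rfl fun j _ => by ring

theorem torque_eq_matVec_wedge {n : ℕ} (x v : Euc n) (f : Module.Dual ℝ (Euc n)) :
    torque ℝ x v f
      = matVec (wedge x v) ((InnerProductSpace.toDual ℝ _).symm f.toContinuousLinearMap) := by
  rw [matVec_wedge, torque_apply, InnerProductSpace.toDual_symm_apply,
    InnerProductSpace.toDual_symm_apply]
  rfl

theorem sum_torque_eq_zero_of_sum_wedge_eq_zero {n : ℕ} {ι : Type*} [Fintype ι] {x v : ι → Euc n}
    (h : ∑ i, wedge (x i) (v i) = 0) : ∑ i, torque ℝ (x i) (v i) = 0 := by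
  ext1 f
  simp only [LinearMap.sum_apply, torque_eq_matVec_wedge, matVec]
  rw [← LinearMap.sum_apply, ← map_sum, h, map_zero, LinearMap.zero_apply, LinearMap.zero_apply]

theorem matVec_smul {n : ℕ} (c : ℝ) (A : Matrix (Fin n) (Fin n) ℝ) (v : Euc n) :
    matVec (c • A) v = c • matVec A v := by
  rw [matVec, map_smul, LinearMap.smul_apply, matVec]

theorem beam_smul {n K : ℕ} (c : ℝ) (A : Matrix (Fin n) (Fin n) ℝ) (b : Fin K → Euc n) :
    beam (c • A) b = c • beam A b := by
  funext S
  simp only [beam, matVec_smul, Pi.smul_apply, Finset.smul_sum, smul_comm c]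

/-- The set functions that are finite sums of structural symmetric beams over simplices with `K`
vertices, as a subspace: working modulo it means working up to beams. -/
def beamSubmodule (n K : ℕ) : Submodule ℝ (Set (Euc n) → Euc n) where
  carrier := {G | IsBeamSum K G}
  zero_mem' := ⟨0, Fin.elim0, Fin.elim0, fun j => j.elim0, fun j => j.elim0, fun j => j.elim0, by
    funext S; simp⟩
  add_mem' := by
    rintro _ _ ⟨m₁, τ₁, A₁, hτ₁, hA₁, hAτ₁, rfl⟩ ⟨m₂, τ₂, A₂, hτ₂, hA₂, hAτ₂, rfl⟩
    refine ⟨m₁ + m₂, Fin.append τ₁ τ₂, Fin.append A₁ A₂, ?_, ?_, ?_, ?_⟩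
    · exact Fin.addCases (by simpa using hτ₁) (by simpa using hτ₂)
    · exact Fin.addCases (by simpa using hA₁) (by simpa using hA₂)
    · exact Fin.addCases (by simpa using hAτ₁) (by simpa using hAτ₂)
    · funext S
      simp [Fin.sum_univ_add]
  smul_mem' := by
    rintro c _ ⟨m, τ, A, hτ, hA, hAτ, rfl⟩
    refine ⟨m, τ, fun j => c • A j, hτ, fun j => (hA j).smul c, fun j v => ?_, ?_⟩
    · rw [matVec_smul]
      exact Submodule.smul_mem _ _ (hAτ j v)
    · funext S
      simp only [Pi.smul_apply, Finset.smul_sum, beam_smul]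

theorem beam_rankOne_mem_beamSubmodule {n K : ℕ} {b : Fin K → Euc n} (hb : AffineIndependent ℝ b)
    (i j : Fin K) : beam (rankOne (b j - b i)) b ∈ beamSubmodule n K := by
  refine ⟨1, fun _ => b, fun _ => rankOne (b j - b i), fun _ => hb, fun _ => ?_, fun _ v => ?_, ?_⟩
  · ext p q
    exact mul_comm _ _
  · rw [matVec_rankOne]
    exact Submodule.smul_mem _ _
      (vsub_mem_vectorSpan ℝ (Set.mem_range_self j) (Set.mem_range_self i))
  · simp

/-- The force `v` spread uniformly over `C`: the vector measure `v μ_C / H^d(C)`. -/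
def uniformForce {n : ℕ} (d : ℝ) (C : Set (Euc n)) : Euc n →ₗ[ℝ] (Set (Euc n) → Euc n) :=
  LinearMap.pi fun S => ((μH[d] C).toReal⁻¹ * (μH[d] (S ∩ C)).toReal) • LinearMap.id

theorem uniformForce_apply {n : ℕ} (d : ℝ) (C : Set (Euc n)) (v : Euc n) (S : Set (Euc n)) :
    uniformForce d C v S = ((μH[d] C).toReal⁻¹ * (μH[d] (S ∩ C)).toReal) • v :=
  rfl

theorem uniformForce_toReal_smul {n : ℕ} {d : ℝ} {C : Set (Euc n)} (hC : (μH[d] C).toReal ≠ 0)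
    (v : Euc n) :
    uniformForce d C ((μH[d] C).toReal • v) = fun S => (μH[d] (S ∩ C)).toReal • v := by
  funext S
  rw [uniformForce_apply, smul_smul, mul_right_comm, inv_mul_cancel₀ hC, one_mul]

variable {n K : ℕ} {b : Fin (K + 2) → Euc n}

theorem toReal_hausdorffMeasure_face_pos (hb : AffineIndependent ℝ b) (i : Fin (K + 2)) :
    0 < (μH[K] (simplexSet (face b i))).toReal :=
  toReal_hausdorffMeasure_convexHull_range_pos
    (hb.comp_embedding (Function.Embedding.subtype fun j => j ≠ i)) (by simp)

theorem beam_rankOne_eq_smul_uniformForce_sub (hb : AffineIndependent ℝ b) {i j : Fin (K + 2)}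
    (hij : i ≠ j) :
    beam (rankOne (b j - b i)) b
      = ((μH[K] (simplexSet (face b i))).toReal * ⟪conormal b i, b j - b i⟫) •
        (uniformForce K (simplexSet (face b i)) (b j - b i)
          - uniformForce K (simplexSet (face b j)) (b j - b i)) := by
  have hi := (toReal_hausdorffMeasure_face_pos hb i).ne'
  have hj := (toReal_hausdorffMeasure_face_pos hb j).ne'
  have hbalance := (isConormal_conormal hb i).toReal_hausdorffMeasure_face_mul_inner_comm
    (isConormal_conormal hb j) hij
  rw [← neg_sub, inner_neg_right, mul_neg, neg_eq_iff_eq_neg] at hbalance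
  have hdim : ((K + 2 : ℕ) : ℝ) - 2 = K := by push_cast; ring
  funext S
  simp only [beam, hdim, matVec_rankOne]
  rw [Fintype.sum_eq_add i j hij fun m hm => by
    rw [(isConormal_conormal hb m).inner_sub_eq_zero hm.2.symm hm.1.symm, zero_smul, smul_zero],
    Pi.smul_apply, Pi.sub_apply, uniformForce_apply, uniformForce_apply, ← sub_smul, smul_smul,
    smul_smul, smul_smul, ← add_smul]
  congr 1
  field_simp
  linear_combination (μH[K] (S ∩ simplexSet (face b j))).toReal * hbalance

theorem uniformForce_face_sub_mem_beamSubmodule (hb : AffineIndependent ℝ b) (i j : Fin (K + 2)) :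
    uniformForce K (simplexSet (face b j)) (b j - b i)
      - uniformForce K (simplexSet (face b i)) (b j - b i) ∈ beamSubmodule n (K + 2) := by
  obtain rfl | hij := eq_or_ne i j
  · simp
  have hinner : ⟪conormal b i, b j - b i⟫ ≠ 0 := by
    rw [← neg_sub, inner_neg_right, neg_ne_zero]
    exact ((isConormal_conormal hb i).inner_sub_neg hij.symm).ne
  have hmem := beam_rankOne_mem_beamSubmodule hb i j
  rw [beam_rankOne_eq_smul_uniformForce_sub hb hij, Submodule.smul_mem_iff _
    (mul_ne_zero (toReal_hausdorffMeasure_face_pos hb i).ne' hinner)] at hmem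
  rw [← neg_sub]
  exact neg_mem hmem

theorem isExchangeInvariant_mkQ_uniformForce [DecidableEq (Euc n)] (d : ℕ) :
    IsExchangeInvariant d fun t : Finset (Euc n) =>
      (beamSubmodule n (d + 2)).mkQ ∘ₗ uniformForce d (convexHull ℝ (t : Set (Euc n))) := by
  intro t ht p hp q hq
  let e : Fin (d + 2) ≃ t := (t.equivFinOfCardEq ht.card_eq).symm
  let b (i : Fin (d + 2)) : Euc n := e i
  have hb : AffineIndependent ℝ b := ht.affineIndependent.comp_embedding e.toEmbedding
  have hface (i : Fin (d + 2)) : convexHull ℝ (t.erase (b i) : Set (Euc n))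
      = simplexSet (face b i) := by
    have hrange : Set.range b = t := by
      rw [show b = (↑) ∘ e from rfl, e.surjective.range_comp, Subtype.range_coe]
    rw [simplexSet, range_face, Set.image_compl_eq_range_sdiff_image hb.injective, hrange,
      Set.image_singleton, Finset.coe_erase]
  obtain ⟨i, rfl⟩ : ∃ i, b i = p := ⟨e.symm ⟨p, hp⟩, by simp [b]⟩
  obtain ⟨j, rfl⟩ : ∃ j, b j = q := ⟨e.symm ⟨q, hq⟩, by simp [b]⟩
  simp only [LinearMap.comp_apply, hface]
  exact (Submodule.Quotient.eq _).mpr (uniformForce_face_sub_mem_beamSubmodule hb i j)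

end Beam

section Equilibrium

theorem isVertexSet_image_univ {n m : ℕ} [DecidableEq (Euc n)] {b : Fin m → Euc n}
    (hb : AffineIndependent ℝ b) : IsVertexSet ℝ m (Finset.univ.image b) where
  affineIndependent := hb.range.mono (by simp)
  card_eq := by rw [Finset.card_image_of_injective _ hb.injective, Finset.card_fin]

theorem sum_image_univ_eq_smul_bary {n m : ℕ} [DecidableEq (Euc n)] {b : Fin (m + 1) → Euc n}
    (hb : Function.Injective b) :
    ∑ x ∈ Finset.univ.image b, x = ((m + 1 : ℕ) : ℝ) • bary b := by
  rw [Finset.sum_image hb.injOn, bary, Fintype.card_fin, smul_inv_smul₀ (by positivity)]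

theorem smul_wedge {n : ℕ} (c : ℝ) (x v : Euc n) : c • wedge x v = wedge x (c • v) := by
  ext p q
  simp only [wedge, Matrix.smul_apply, of_apply, PiLp.smul_apply, smul_eq_mul]
  ring

theorem sum_torque_sum_eq_zero_of_equil {m n l : ℕ} [DecidableEq (Euc n)] {d : ℝ}
    {s : Fin l → Fin (m + 1) → Euc n} (hs : ∀ i, Function.Injective (s i)) {F : Fin l → Euc n}
    (h : equil d s F) :
    ∑ i, torque ℝ (∑ x ∈ Finset.univ.image (s i), x)
      ((μH[d] (simplexSet (s i))).toReal • F i) = 0 := by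
  simp only [sum_image_univ_eq_smul_bary (hs _), map_smul _ ((m + 1 : ℕ) : ℝ),
    LinearMap.smul_apply, ← Finset.smul_sum]
  rw [sum_torque_eq_zero_of_sum_wedge_eq_zero, smul_zero]
  simpa only [smul_wedge] using h.2

theorem sys_eq_sum_uniformForce {m n l : ℕ} {s : Fin l → Fin (m + 1) → Euc n}
    (hs : ∀ i, AffineIndependent ℝ (s i)) (F : Fin l → Euc n) :
    sys m s F =
      ∑ i, uniformForce m (simplexSet (s i)) ((μH[m] (simplexSet (s i))).toReal • F i) := by
  funext S
  rw [Finset.sum_apply]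
  refine Finset.sum_congr rfl fun i _ => ?_
  rw [uniformForce_toReal_smul]
  exact (toReal_hausdorffMeasure_convexHull_range_pos (hs i) (by simp)).ne'

theorem statement7_general {k' n l : ℕ} (hn : k' + 2 ≤ n) (s : Fin l → Fin (k' + 1) → Euc n)
    (hs : ∀ i, AffineIndependent ℝ (s i)) (F : Fin l → Euc n) (hequil : equil (k' : ℝ) s F) :
    IsBeamSum (k' + 2) (sys (k' : ℝ) s F) := by
  classical
  have hzero := (isExchangeInvariant_mkQ_uniformForce k').sum_apply_eq_zero
    (by rwa [finrank_euclideanSpace_fin]) (fun i => isVertexSet_image_univ (hs i)) hequil.1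
    (sum_torque_sum_eq_zero_of_equil (fun i => (hs i).injective) hequil)
  simp only [LinearMap.comp_apply, Finset.coe_image, Finset.coe_univ, Set.image_univ,
    ← map_sum] at hzero
  change sys (k' : ℝ) s F ∈ beamSubmodule n (k' + 2)
  rw [sys_eq_sum_uniformForce hs]
  exact (Submodule.Quotient.mk_eq_zero _).mp hzero

end Equilibrium

/-- (Proposition 3.)  With `k = k' + 1 ≥ 1` and `n ≥ k + 2`, an
equilibrium system of arbitrary forces on arbitrary `(k−1)`-simplices of `ℝⁿ`
splits as `F = B + Fʰ`, with `B` a finite sum of `k`-beams and `Fʰ` an equilibrium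
system whose simplices and forces all lie in the hyperplane `{x : ⟪x, eₙ⟫ = 0}`. -/
theorem statement7 {k' n l : ℕ} (hn : k' + 3 ≤ n)
    (en : Euc n) (hen : en = EuclideanSpace.single (⟨n - 1, by omega⟩ : Fin n) 1)
    (s : Fin l → Fin (k' + 1) → Euc n) (hs : ∀ i, AffineIndependent ℝ (s i))
    (F : Fin l → Euc n)
    (hequil : equil (k' : ℝ) s F) :
    ∃ (B : Set (Euc n) → Euc n), IsBeamSum (k' + 2) B ∧
      ∃ (l₂ : ℕ) (s₂ : Fin l₂ → Fin (k' + 1) → Euc n) (F₂ : Fin l₂ → Euc n),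
        (∀ i, AffineIndependent ℝ (s₂ i)) ∧
        (∀ i, simplexSet (s₂ i) ⊆ {x : Euc n | ⟪x, en⟫ = 0}) ∧
        (∀ i, ⟪F₂ i, en⟫ = 0) ∧
        equil (k' : ℝ) s₂ F₂ ∧
        sys (k' : ℝ) s F = fun S => B S + sys (k' : ℝ) s₂ F₂ S :=
  ⟨sys (k' : ℝ) s F, statement7_general (by omega) s hs F hequil, 0, Fin.elim0, Fin.elim0,
    fun i => i.elim0, fun i => i.elim0, fun i => i.elim0, ⟨by simp, by simp⟩, by
      funext S
      simp [sys]⟩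

end
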